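/- For all complex numbers q and x with |q| < 1 and |x| < 1: Σ_{n=0}^∞ Σ_{c=0}^n (x;q)_{n+1} x^n q^{c²+c} x^{2c} [n choose c]_q = (qx;q)_∞ · Σ_{c=0}^∞ q^{c²+c} x^{3c} / (qx;q)_c + (1−x) · Σ_{n=0}^∞ Σ_{c=0}^n ((qx;q)_n − (qx;q)_∞) · x^n · q^{c²+c} · x^{2c} · [n choose c]_q, all series converging absolutely. -/

import Mathlib

/-- The finite q-Pochhammer symbol `(x;q)_n = ∏_{i=1}^n (1 - x q^{i-1})`. -/
noncomputable def qPoch (q x : ℂ) (n : ℕ) : ℂ := ∏ i ∈ Finset.range n, (1 - x * q ^ i)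

/-- The infinite q-Pochhammer symbol `(x;q)_∞ = ∏_{i=1}^∞ (1 - x q^{i-1})`. -/
noncomputable def qPochInf (q x : ℂ) : ℂ := ∏' i : ℕ, (1 - x * q ^ i)

/-- The Gaussian binomial coefficient `[n choose c]_q`. -/
noncomputable def qBinom (q : ℂ) (n c : ℕ) : ℂ :=
  if c ≤ n then qPoch q q n / (qPoch q q c * qPoch q q (n - c)) else 0

/-!
For a summable weight `w`, expand `∑ₙ xⁿ ∑_c w c [n choose c]_q` by columns: the `q`-Pascal rule
gives the generating function `∑ₙ [n choose c]_q xⁿ = x^c / (x;q)_{c+1}`, so the sum is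
`(1 - x)⁻¹ ∑_c w c x^c / (qx;q)_c`. Since `(x;q)_{n+1} = (1 - x) (qx;q)_n`, inserting `(x;q)_{n+1}`
in the `n`-th term and splitting `(qx;q)_n` into its limit `(qx;q)_∞` and the remainder
gives the identity; the theorem is the case `w c = q^(c²+c) x^(2c)`.
-/

open Filter Topology

section Pochhammer

variable {q x : ℂ}

theorem qPoch_zero (q x : ℂ) : qPoch q x 0 = 1 :=
  Finset.prod_range_zero _

theorem qPoch_succ (q x : ℂ) (n : ℕ) : qPoch q x (n + 1) = qPoch q x n * (1 - x * q ^ n) :=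
  Finset.prod_range_succ _ _

theorem qPoch_succ' (q x : ℂ) (n : ℕ) : qPoch q x (n + 1) = (1 - x) * qPoch q (q * x) n := by
  simp only [qPoch, Finset.prod_range_succ', pow_zero, mul_one, pow_succ', mul_left_comm x q,
    mul_assoc q x]
  exact mul_comm _ _

theorem one_sub_mul_pow_ne_zero (hq : ‖q‖ ≤ 1) (hx : ‖x‖ < 1) (i : ℕ) : 1 - x * q ^ i ≠ 0 := by
  have norm_lt_one : ‖x * q ^ i‖ < 1 := by
    rw [norm_mul, norm_pow]
    exact mul_lt_one_of_nonneg_of_lt_one_left (norm_nonneg x) hx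
      (pow_le_one₀ (norm_nonneg q) hq)
  intro h
  rw [← sub_eq_zero.mp h, norm_one] at norm_lt_one
  exact lt_irrefl 1 norm_lt_one

theorem qPoch_ne_zero (hq : ‖q‖ ≤ 1) (hx : ‖x‖ < 1) (n : ℕ) : qPoch q x n ≠ 0 :=
  Finset.prod_ne_zero_iff.mpr fun i _ => one_sub_mul_pow_ne_zero hq hx i

theorem summable_norm_neg_mul_pow (hq : ‖q‖ < 1) (x : ℂ) :
    Summable fun i : ℕ => ‖-(x * q ^ i)‖ :=
  ((summable_geometric_of_norm_lt_one hq).mul_left x).neg.norm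

theorem tendsto_qPoch (hq : ‖q‖ < 1) (x : ℂ) :
    Tendsto (qPoch q x) atTop (𝓝 (qPochInf q x)) := by
  simpa only [← sub_eq_add_neg] using!
    (multipliable_one_add_of_summable (summable_norm_neg_mul_pow hq x)).tendsto_prod_tprod_nat

theorem qPochInf_ne_zero (hq : ‖q‖ < 1) (hx : ∀ i : ℕ, 1 - x * q ^ i ≠ 0) :
    qPochInf q x ≠ 0 := by
  simpa only [← sub_eq_add_neg] using!
    tprod_one_add_ne_zero_of_summable (f := fun i : ℕ => -(x * q ^ i))
      (by simpa only [← sub_eq_add_neg] using hx) (summable_norm_neg_mul_pow hq x)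

theorem tendsto_inv_qPoch (hq : ‖q‖ < 1) (hx : ∀ i : ℕ, 1 - x * q ^ i ≠ 0) :
    Tendsto (fun n => (qPoch q x n)⁻¹) atTop (𝓝 (qPochInf q x)⁻¹) :=
  (tendsto_qPoch hq x).inv₀ (qPochInf_ne_zero hq hx)

theorem summable_div_qPoch {w : ℕ → ℂ} (hw : Summable w) (hq : ‖q‖ < 1)
    (hx : ∀ i : ℕ, 1 - x * q ^ i ≠ 0) : Summable fun c => w c / qPoch q x c := by
  simp only [div_eq_mul_inv]
  refine hw.norm.mul_tendsto_const (c := (qPochInf q x)⁻¹) ?_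
  rw [Nat.cofinite_eq_atTop]
  exact tendsto_inv_qPoch hq hx

end Pochhammer

section GaussianBinomial

variable {q : ℂ}

theorem qBinom_of_lt (q : ℂ) {n c : ℕ} (h : n < c) : qBinom q n c = 0 :=
  if_neg h.not_ge

theorem qBinom_of_add_eq (q : ℂ) {n c k : ℕ} (h : c + k = n) :
    qBinom q n c = qPoch q q n / (qPoch q q c * qPoch q q k) := by
  subst h
  rw [qBinom, if_pos (Nat.le_add_right c k), Nat.add_sub_cancel_left]

theorem qBinom_zero_right {n : ℕ} (hn : qPoch q q n ≠ 0) : qBinom q n 0 = 1 := by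
  simp [qBinom, qPoch_zero, hn]

theorem qBinom_self {n : ℕ} (hn : qPoch q q n ≠ 0) : qBinom q n n = 1 := by
  simp [qBinom, qPoch_zero, hn]

theorem qBinom_succ_succ (hq : ∀ n, qPoch q q n ≠ 0) (n c : ℕ) :
    qBinom q (n + 1) (c + 1) = q ^ (c + 1) * qBinom q n (c + 1) + qBinom q n c := by
  rcases lt_trichotomy n c with hlt | rfl | hgt
  · simp only [qBinom_of_lt q hlt, qBinom_of_lt q (Nat.succ_lt_succ hlt),
      qBinom_of_lt q (hlt.trans c.lt_succ_self), mul_zero, add_zero]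
  · simp only [qBinom_self (hq _), qBinom_of_lt q n.lt_succ_self, mul_zero, zero_add]
  · obtain ⟨k, hk⟩ := Nat.exists_eq_add_of_lt hgt
    have factor_ne (i : ℕ) : 1 - q * q ^ i ≠ 0 :=
      right_ne_zero_of_mul (qPoch_succ q q i ▸ hq (i + 1))
    rw [qBinom_of_add_eq q (show c + 1 + (k + 1) = n + 1 by lia),
      qBinom_of_add_eq q (show c + 1 + k = n by lia),
      qBinom_of_add_eq q (show c + (k + 1) = n by lia),
      qPoch_succ q q n, qPoch_succ q q c, qPoch_succ q q k, hk]
    field_simp [hq c, hq k, factor_ne c, factor_ne k]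
    ring

theorem exists_norm_qBinom_le (hq : ‖q‖ < 1) : ∃ C : ℝ, ∀ n c, ‖qBinom q n c‖ ≤ C := by
  obtain ⟨A, hA_pos, hA⟩ :=
    (Metric.isBounded_range_of_tendsto _ (tendsto_qPoch hq q)).exists_pos_norm_le
  obtain ⟨B, hB_pos, hB⟩ := (Metric.isBounded_range_of_tendsto _
    (tendsto_inv_qPoch hq (one_sub_mul_pow_ne_zero hq.le hq))).exists_pos_norm_le
  rw [Set.forall_mem_range] at hA hB
  refine ⟨A * (B * B), fun n c => ?_⟩
  rcases le_or_gt c n with hcn | hnc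
  · rw [qBinom, if_pos hcn, div_eq_mul_inv, mul_inv, norm_mul, norm_mul]
    gcongr
    exacts [hA n, hB c, hB (n - c)]
  · rw [qBinom_of_lt q hnc, norm_zero]
    positivity

theorem summable_mul_qBinom {ι : Type*} {f : ι → ℂ} (hf : Summable f) (hq : ‖q‖ < 1)
    (n c : ι → ℕ) : Summable fun i => f i * qBinom q (n i) (c i) := by
  obtain ⟨C, hC⟩ := exists_norm_qBinom_le hq
  refine .of_norm_bounded (hf.norm.mul_right C) fun i => ?_
  rw [norm_mul]
  gcongr
  exact hC _ _

theorem hasSum_pow_mul_qBinom {x : ℂ} (hq : ‖q‖ < 1) (hx : ‖x‖ < 1) (c : ℕ) :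
    HasSum (fun n => x ^ n * qBinom q n c) (x ^ c / qPoch q x (c + 1)) := by
  have hqq := qPoch_ne_zero hq.le hq
  induction c with
  | zero =>
    simpa [qBinom_zero_right (hqq _), qPoch_succ, qPoch_zero] using
      hasSum_geometric_of_norm_lt_one hx
  | succ c ih =>
    have summable_col : Summable fun n => x ^ n * qBinom q n (c + 1) :=
      summable_mul_qBinom (summable_geometric_of_norm_lt_one hx) hq id fun _ => c + 1
    obtain ⟨S, hS⟩ := summable_col
    have shifted : HasSum (fun n => x ^ (n + 1) * qBinom q (n + 1) (c + 1)) S := by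
      simpa [qBinom_of_lt q c.succ_pos] using (hasSum_nat_add_iff' 1).mpr hS
    have pascal (n : ℕ) : x ^ (n + 1) * qBinom q (n + 1) (c + 1)
        = x * q ^ (c + 1) * (x ^ n * qBinom q n (c + 1)) + x * (x ^ n * qBinom q n c) := by
      rw [qBinom_succ_succ hqq]
      ring
    simp only [pascal] at shifted
    have recurrence : S = x * q ^ (c + 1) * S + x * (x ^ c / qPoch q x (c + 1)) :=
      shifted.unique ((hS.mul_left _).add (ih.mul_left x))
    have poch_ne := qPoch_ne_zero hq.le hx (c + 1)
    have factor_ne := one_sub_mul_pow_ne_zero hq.le hx (c + 1)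
    convert hS using 1
    rw [qPoch_succ q x (c + 1), div_eq_iff (mul_ne_zero poch_ne factor_ne)]
    field_simp at recurrence
    linear_combination -recurrence

end GaussianBinomial

section WeightedRowSum

/-- The sum `∑_c w c [n choose c]_q` over the `n`-th row of the Gaussian Pascal triangle, with
weights `w`. For `w c = q^(c²+c) x^(2c)` it is the inner sum of the theorem without its factors
depending on `n` alone. -/
noncomputable def qBinomSum (q : ℂ) (w : ℕ → ℂ) (n : ℕ) : ℂ :=
  ∑ c ∈ Finset.range (n + 1), w c * qBinom q n c

variable {q x : ℂ} {w : ℕ → ℂ}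

theorem tsum_mul_qBinom (q : ℂ) (w : ℕ → ℂ) (n : ℕ) :
    ∑' c, w c * qBinom q n c = qBinomSum q w n :=
  tsum_eq_sum fun c hc => by
    rw [qBinom_of_lt q (by simpa using hc), mul_zero]

theorem summable_pow_mul_weight_mul_qBinom (hq : ‖q‖ < 1) (hx : ‖x‖ < 1) (hw : Summable w) :
    Summable fun p : ℕ × ℕ => x ^ p.1 * (w p.2 * qBinom q p.1 p.2) := by
  simpa only [mul_assoc] using summable_mul_qBinom
    ((summable_geometric_of_norm_lt_one hx).norm.mul_norm hw.norm).of_norm hq Prod.fst Prod.snd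

theorem summable_pow_mul_qBinomSum (hq : ‖q‖ < 1) (hx : ‖x‖ < 1) (hw : Summable w) :
    Summable fun n => x ^ n * qBinomSum q w n := by
  simpa only [tsum_mul_left, tsum_mul_qBinom] using
    (summable_pow_mul_weight_mul_qBinom hq hx hw).prod

theorem one_sub_mul_tsum_pow_mul_qBinomSum (hq : ‖q‖ < 1) (hx : ‖x‖ < 1) (hw : Summable w) :
    (1 - x) * ∑' n, x ^ n * qBinomSum q w n = ∑' c, w c * x ^ c / qPoch q (q * x) c := by
  have one_sub_ne : 1 - x ≠ 0 := by simpa using one_sub_mul_pow_ne_zero hq.le hx 0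
  have column (c : ℕ) : (1 - x) * ∑' n, x ^ n * (w c * qBinom q n c)
      = w c * x ^ c / qPoch q (q * x) c := by
    simp only [mul_left_comm _ (w c)]
    rw [tsum_mul_left, (hasSum_pow_mul_qBinom hq hx c).tsum_eq, qPoch_succ']
    field_simp
  calc (1 - x) * ∑' n, x ^ n * qBinomSum q w n
      = (1 - x) * ∑' n, ∑' c, x ^ n * (w c * qBinom q n c) := by
        simp only [tsum_mul_left, tsum_mul_qBinom]
    _ = (1 - x) * ∑' c, ∑' n, x ^ n * (w c * qBinom q n c) := by
        rw [Summable.tsum_comm (f := fun n c => x ^ n * (w c * qBinom q n c))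
          (summable_pow_mul_weight_mul_qBinom hq hx hw)]
    _ = ∑' c, w c * x ^ c / qPoch q (q * x) c := by
        rw [← tsum_mul_left]
        simp only [column]

theorem summable_qPoch_mul_pow_mul_qBinomSum (hq : ‖q‖ < 1) (hx : ‖x‖ < 1) (hw : Summable w)
    (y : ℂ) : Summable fun n => qPoch q y n * (x ^ n * qBinomSum q w n) := by
  simp only [mul_comm (qPoch q y _)]
  refine (summable_pow_mul_qBinomSum hq hx hw).norm.mul_tendsto_const (c := qPochInf q y) ?_
  rw [Nat.cofinite_eq_atTop]
  exact tendsto_qPoch hq y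

theorem summable_qPoch_sub_qPochInf_mul_pow_mul_qBinomSum (hq : ‖q‖ < 1) (hx : ‖x‖ < 1)
    (hw : Summable w) (y : ℂ) :
    Summable fun n => (qPoch q y n - qPochInf q y) * (x ^ n * qBinomSum q w n) := by
  simpa only [sub_mul] using (summable_qPoch_mul_pow_mul_qBinomSum hq hx hw y).sub
    ((summable_pow_mul_qBinomSum hq hx hw).mul_left (qPochInf q y))

theorem tsum_qPoch_succ_mul_pow_mul_qBinomSum (hq : ‖q‖ < 1) (hx : ‖x‖ < 1) (hw : Summable w) :
    ∑' n, qPoch q x (n + 1) * (x ^ n * qBinomSum q w n)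
      = qPochInf q (q * x) * ∑' c, w c * x ^ c / qPoch q (q * x) c
        + (1 - x) * ∑' n, (qPoch q (q * x) n - qPochInf q (q * x)) *
            (x ^ n * qBinomSum q w n) := by
  have split_limit : ∑' n, qPoch q (q * x) n * (x ^ n * qBinomSum q w n)
      = qPochInf q (q * x) * ∑' n, x ^ n * qBinomSum q w n
        + ∑' n, (qPoch q (q * x) n - qPochInf q (q * x)) * (x ^ n * qBinomSum q w n) := by
    rw [← tsum_mul_left, ← ((summable_pow_mul_qBinomSum hq hx hw).mul_left _).tsum_add
      (summable_qPoch_sub_qPochInf_mul_pow_mul_qBinomSum hq hx hw (q * x))]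
    simp only [← add_mul, add_sub_cancel]
  simp only [qPoch_succ', mul_assoc (1 - x)]
  rw [tsum_mul_left, split_limit, ← one_sub_mul_tsum_pow_mul_qBinomSum hq hx hw]
  ring

end WeightedRowSum

theorem summable_pow_sq_add_self_mul_pow {q y : ℂ} (hq : ‖q‖ ≤ 1) (hqy : ‖q * y‖ < 1) :
    Summable fun c : ℕ => q ^ (c ^ 2 + c) * y ^ c := by
  refine .of_norm_bounded (summable_geometric_of_lt_one (norm_nonneg _) hqy) fun c => ?_
  calc ‖q ^ (c ^ 2 + c) * y ^ c‖ = ‖q‖ ^ c ^ 2 * ‖q * y‖ ^ c := by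
        simp only [norm_mul, norm_pow]
        ring
    _ ≤ ‖q * y‖ ^ c :=
        mul_le_of_le_one_left (by positivity) (pow_le_one₀ (norm_nonneg q) hq)

theorem stmt_2 (q x : ℂ) (hq : ‖q‖ < 1) (hx : ‖x‖ < 1) :
    Summable (fun n : ℕ => ∑ c ∈ Finset.range (n + 1),
      qPoch q x (n + 1) * x ^ n * q ^ (c ^ 2 + c) * x ^ (2 * c) * qBinom q n c) ∧
    Summable (fun c : ℕ => q ^ (c ^ 2 + c) * x ^ (3 * c) / qPoch q (q * x) c) ∧
    Summable (fun n : ℕ => ∑ c ∈ Finset.range (n + 1),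
      (qPoch q (q * x) n - qPochInf q (q * x)) * x ^ n * q ^ (c ^ 2 + c) * x ^ (2 * c) *
        qBinom q n c) ∧
    ∑' n : ℕ, ∑ c ∈ Finset.range (n + 1),
        qPoch q x (n + 1) * x ^ n * q ^ (c ^ 2 + c) * x ^ (2 * c) * qBinom q n c
      = qPochInf q (q * x) * ∑' c : ℕ, q ^ (c ^ 2 + c) * x ^ (3 * c) / qPoch q (q * x) c
        + (1 - x) * ∑' n : ℕ, ∑ c ∈ Finset.range (n + 1),
            (qPoch q (q * x) n - qPochInf q (q * x)) * x ^ n * q ^ (c ^ 2 + c) * x ^ (2 * c) *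
              qBinom q n c := by
  have norm_mul_lt_one {y : ℂ} (hy : ‖y‖ < 1) : ‖q * y‖ < 1 :=
    norm_mul q y ▸ mul_lt_one_of_nonneg_of_lt_one_left (norm_nonneg q) hq hy.le
  have weight_summable {k : ℕ} (hk : k ≠ 0) :
      Summable fun c : ℕ => q ^ (c ^ 2 + c) * x ^ (k * c) := by
    simpa only [pow_mul] using summable_pow_sq_add_self_mul_pow hq.le
      (norm_mul_lt_one (norm_pow x k ▸ pow_lt_one₀ (norm_nonneg x) hx hk))
  have hw := weight_summable two_ne_zero
  have row (a : ℂ) (n : ℕ) : ∑ c ∈ Finset.range (n + 1),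
      a * x ^ n * q ^ (c ^ 2 + c) * x ^ (2 * c) * qBinom q n c
      = a * (x ^ n * qBinomSum q (fun c => q ^ (c ^ 2 + c) * x ^ (2 * c)) n) := by
    simp only [qBinomSum, Finset.mul_sum, mul_assoc]
  have weight_mul_pow (c : ℕ) :
      q ^ (c ^ 2 + c) * x ^ (3 * c) = q ^ (c ^ 2 + c) * x ^ (2 * c) * x ^ c := by ring
  simp only [row]
  refine ⟨?_, summable_div_qPoch (weight_summable three_ne_zero) hq
    (one_sub_mul_pow_ne_zero hq.le (norm_mul_lt_one hx)),
    summable_qPoch_sub_qPochInf_mul_pow_mul_qBinomSum hq hx hw (q * x), ?_⟩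
  · simpa only [qPoch_succ', mul_assoc] using
      (summable_qPoch_mul_pow_mul_qBinomSum hq hx hw (q * x)).mul_left (1 - x)
  · simpa only [weight_mul_pow] using tsum_qPoch_succ_mul_pow_mul_qBinomSum hq hx hw
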